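/- Let T be an ergodic measure-preserving invertible transformation of a probability space (X, m), let f₀ ∈ L¹(X, m) be non-negative, and let ε₁ > 0 and δ₁ > 0. Then there exists N₀ ∈ ℕ such that for every N₁ ≥ N₀ and every measurable set B₁ for which the sets T¹B₁, …, T^{N₁}B₁ are pairwise disjoint and their union E₁ = ⨆_{i=1}^{N₁} TⁱB₁ has measure m(E₁) = ε₁, the set C₁ = X ∖ E₁ satisfies | ∫ f₀·𝟙_{C₁} dm − m(C₁) · ∫ f₀ dm | < δ₁. -/

import Mathlib

open MeasureTheory Filter Set

lemma tci_L2 {X : Type*} [MeasurableSpace X] (m : Measure X) [IsProbabilityMeasure m]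
    (T : X → X) (hT : Ergodic T m) (f : X → ℝ) (hf : MemLp f 2 m) (h0 : ∫ x, f x ∂m = 0)
    (ε : ℝ) (hε : 0 < ε) :
    ∃ g : X → ℝ, Integrable g m ∧ ∫ x, |f x - (g x - g (T x))| ∂m < ε := by
  have hTm := hT.toMeasurePreserving
  let U : Lp ℝ 2 m →ₗᵢ[ℝ] Lp ℝ 2 m := Lp.compMeasurePreservingₗᵢ ℝ T hTm
  let A : Lp ℝ 2 m →ₗ[ℝ] Lp ℝ 2 m := LinearMap.id - U.toLinearMap
  have hA : ∀ g, A g = g - U g := fun g => rfl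
  have hmem : hf.toLp f ∈ closure ((LinearMap.range A : Submodule ℝ (Lp ℝ 2 m)) : Set (Lp ℝ 2 m)) := by
    rw [← Submodule.topologicalClosure_coe, ← Submodule.orthogonal_orthogonal_eq_closure]
    rw [SetLike.mem_coe, Submodule.mem_orthogonal]
    intro u hu
    rw [Submodule.mem_orthogonal] at hu
    have h1 : inner ℝ (u - U u) u = 0 := hu _ ⟨u, hA u⟩
    have hUu : U u = u := by
      rw [inner_sub_left, real_inner_self_eq_norm_sq] at h1
      have : ‖U u - u‖ ^ 2 = 0 := by
        rw [norm_sub_sq_real, U.norm_map]; linarith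
      exact sub_eq_zero.1 (norm_eq_zero.1 (pow_eq_zero_iff two_ne_zero |>.1 this))
    have hinv : u ∘ T =ᵐ[m] u := by
      have := Lp.coeFn_compMeasurePreserving u hTm
      refine this.symm.trans ?_
      have h2 : Lp.compMeasurePreserving T hTm u = u := hUu
      rw [h2]
    obtain ⟨c, hc⟩ := hT.ae_eq_const_of_ae_eq_comp_ae (Lp.aestronglyMeasurable u) hinv
    rw [L2.inner_def]
    have : (fun x => inner ℝ (u x) (hf.toLp f x)) =ᵐ[m] fun x => c * f x := by
      filter_upwards [hc, hf.coeFn_toLp] with x h1 h2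
      rw [h1, h2]; simp [mul_comm]
    rw [integral_congr_ae this, integral_const_mul, h0, mul_zero]
  obtain ⟨b, ⟨g, rfl⟩, hb⟩ := Metric.mem_closure_iff.1 hmem ε hε
  have hg1 : Integrable (g : X → ℝ) m := (Lp.memLp g).integrable (by norm_num)
  refine ⟨g, hg1, ?_⟩
  rw [dist_eq_norm] at hb
  have hae : (hf.toLp f - A g : Lp ℝ 2 m) =ᵐ[m] fun x => f x - (g x - g (T x)) := by
    rw [hA]
    filter_upwards [Lp.coeFn_sub (hf.toLp f) (g - U g), Lp.coeFn_sub g (U g),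
      hf.coeFn_toLp, Lp.coeFn_compMeasurePreserving g hTm] with x h1 h2 h3 h4
    have h4' : (U g) x = g (T x) := h4
    rw [h1, Pi.sub_apply, h2, Pi.sub_apply, h3, h4']
  set w := hf.toLp f - A g
  have e1 : ∫ x, |f x - (g x - g (T x))| ∂m = (eLpNorm w 1 m).toReal := by
    rw [eLpNorm_congr_ae hae]
    have hi : Integrable (fun x => f x - (g x - g (T x))) m :=
      (hf.integrable (by norm_num)).sub (hg1.sub (hTm.integrable_comp_of_integrable hg1))
    have := integral_norm_eq_lintegral_enorm hi.1
    rw [eLpNorm_one_eq_lintegral_enorm, ← this]; rfl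
  rw [e1]
  refine lt_of_le_of_lt ?_ hb
  rw [Lp.norm_def]
  exact ENNReal.toReal_mono (Lp.eLpNorm_ne_top w)
    (eLpNorm_le_eLpNorm_of_exponent_le (by norm_num) (Lp.aestronglyMeasurable w))

lemma tci_L1 {X : Type*} [MeasurableSpace X] (m : Measure X) [IsProbabilityMeasure m]
    (T : X → X) (hT : Ergodic T m) (f : X → ℝ) (hf : Integrable f m)
    (ε : ℝ) (hε : 0 < ε) :
    ∃ g : X → ℝ, Integrable g m ∧
      ∫ x, |(f x - ∫ y, f y ∂m) - (g x - g (T x))| ∂m < ε := by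
  have hTm := hT.toMeasurePreserving
  obtain ⟨s, hs, hs2⟩ := (memLp_one_iff_integrable.2 hf).exists_simpleFunc_eLpNorm_sub_lt
    (by norm_num) (ε := ENNReal.ofReal (ε/3)) (by simp; positivity)
  have hs1 : Integrable s m := memLp_one_iff_integrable.1 hs2
  have hd : ∫ x, |f x - s x| ∂m < ε / 3 := by
    have := integral_norm_eq_lintegral_enorm (hf.sub hs1).1
    rw [eLpNorm_one_eq_lintegral_enorm] at hs
    have h3 := ENNReal.toReal_lt_of_lt_ofReal hs
    rw [← this] at h3
    exact h3
  have hc : |∫ x, f x ∂m - ∫ x, s x ∂m| < ε / 3 := by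
    rw [← integral_sub hf hs1]
    exact (abs_integral_le_integral_abs).trans_lt hd
  obtain ⟨g, hg, hg2⟩ := tci_L2 m T hT (fun x => s x - ∫ y, s y ∂m)
    ((s.memLp_of_isFiniteMeasure 2 m).sub (memLp_const _))
    (by rw [integral_sub hs1 (integrable_const _)]; simp) (ε/3) (by positivity)
  refine ⟨g, hg, ?_⟩
  have hgg : Integrable (fun x => g x - g (T x)) m :=
    hg.sub (hTm.integrable_comp_of_integrable hg)
  have i1 : Integrable (fun x => |f x - s x|) m := (hf.sub hs1).abs
  have i2 : Integrable (fun x => |s x - ∫ y, s y ∂m - (g x - g (T x))|) m :=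
    ((hs1.sub (integrable_const _)).sub hgg).abs
  have i3 : Integrable (fun _ : X => |∫ x, f x ∂m - ∫ x, s x ∂m|) m := integrable_const _
  have : ∫ x, |(f x - ∫ y, f y ∂m) - (g x - g (T x))| ∂m ≤
      ∫ x, ((|f x - s x| + |s x - ∫ y, s y ∂m - (g x - g (T x))|)
        + |∫ x, f x ∂m - ∫ x, s x ∂m|) ∂m := by
    refine integral_mono ((hf.sub (integrable_const _)).sub hgg).abs ((i1.add i2).add i3) ?_
    intro x
    simp only
    generalize ∫ y, f y ∂m = a
    generalize ∫ y, s y ∂m = b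
    have p1 := abs_le.1 (le_refl |f x - s x|)
    have p2 := abs_le.1 (le_refl |s x - b - (g x - g (T x))|)
    have p3 := abs_le.1 (le_refl |a - b|)
    rw [abs_le]
    constructor <;> linarith [p1.1, p1.2, p2.1, p2.2, p3.1, p3.2]
  have i12 : Integrable (fun x => |f x - s x| + |s x - ∫ y, s y ∂m - (g x - g (T x))|) m :=
    i1.add i2
  rw [integral_add i12 i3, integral_add i1 i2] at this
  simp only [integral_const, probReal_univ, one_smul] at this
  linarith

/-- For an ergodic automorphism `T` and nonnegative `f₀ ∈ L¹`, if a Rokhlin–Halmos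
tower `E₁ = ⨆_{i=1}^{N₁} TⁱB₁` of measure `ε₁` is tall enough (`N₁ ≥ N₀`), then the
integral of `f₀` over the complement `C₁ = X ∖ E₁` is within `δ₁` of the proportional
share `m(C₁)·∫ f₀ dm`. -/
theorem tower_complement_integral
    {X : Type*} [MeasurableSpace X] (m : Measure X) [IsProbabilityMeasure m]
    (T : X ≃ᵐ X) (hT : Ergodic (⇑T) m)
    (f₀ : X → ℝ) (hf₀int : Integrable f₀ m) (hf₀nonneg : ∀ x, 0 ≤ f₀ x)
    (ε₁ δ₁ : ℝ) (hε₁ : 0 < ε₁) (hδ₁ : 0 < δ₁) :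
    ∃ N₀ : ℕ, ∀ N₁ : ℕ, N₀ ≤ N₁ → ∀ B₁ : Set X, MeasurableSet B₁ →
      (Set.PairwiseDisjoint (Set.Icc 1 N₁) (fun i => (⇑T)^[i] '' B₁)) →
      m (⋃ i ∈ Finset.Icc 1 N₁, (⇑T)^[i] '' B₁) = ENNReal.ofReal ε₁ →
      |(∫ x, ((⋃ i ∈ Finset.Icc 1 N₁, (⇑T)^[i] '' B₁)ᶜ).indicator f₀ x ∂m)
        - (m ((⋃ i ∈ Finset.Icc 1 N₁, (⇑T)^[i] '' B₁)ᶜ)).toReal * ∫ x, f₀ x ∂m| < δ₁ := by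
  have hTm := hT.toMeasurePreserving
  obtain ⟨g, hg, hgd⟩ := tci_L1 m T hT f₀ hf₀int (δ₁/3) (by positivity)
  have hsm : ∃ η : ENNReal, 0 < η ∧ ∀ s : Set X, m s < η → |∫ x in s, g x ∂m| < δ₁ / 3 := by
    have h := hg.tendsto_setIntegral_nhds_zero (l := comap m (nhds 0)) (s := id)
      tendsto_comap
    have h2 := h.eventually (Metric.ball_mem_nhds 0 (ε := δ₁/3) (by positivity))
    obtain ⟨η, hη, h3⟩ := (ENNReal.nhds_zero_basis.comap m).eventually_iff.1 h2
    refine ⟨η, hη, fun s hs => ?_⟩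
    have := h3 (x := s) hs
    simpa [Real.dist_eq] using this
  obtain ⟨η, hη, hsm⟩ := hsm
  obtain ⟨N₀, hN₀⟩ := ENNReal.exists_inv_nat_lt hη.ne'
  refine ⟨N₀, fun N hN B hB hdis hmE => ?_⟩
  set S : ℕ → Set X := fun i => (⇑T)^[i] '' B with hS
  have hS1 : ∀ i, S (i+1) = T '' S i := fun i => by
    simp only [hS]; rw [Function.iterate_succ', image_comp]
  have hSm : ∀ i, MeasurableSet (S i) := by
    intro i
    induction i with
    | zero => simpa [hS] using hB
    | succ i ih => rw [hS1]; exact T.measurableSet_image.2 ih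
  have hpre : ∀ i, T ⁻¹' S (i+1) = S i := fun i => by
    rw [hS1, preimage_image_eq _ T.injective]
  have hSmeas : ∀ i, m (S i) = m B := by
    intro i
    induction i with
    | zero => simp [hS]
    | succ i ih => rw [← ih, ← hpre i, hTm.measure_preimage (hSm _).nullMeasurableSet]
  have hSint : ∀ i, ∫ x in S i, g (T x) ∂m = ∫ x in S (i+1), g x ∂m := fun i => by
    rw [← hpre i]
    exact hTm.setIntegral_preimage_emb T.measurableEmbedding g _
  have hdis' : (↑(Finset.Icc 1 N) : Set ℕ).PairwiseDisjoint S := by simpa using hdis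
  set E := ⋃ i ∈ Finset.Icc 1 N, S i with hE
  have hEm : MeasurableSet E := Finset.measurableSet_biUnion _ fun i _ => hSm i
  have hNB : (N : ENNReal) * m B ≤ 1 := by
    have : m E = N * m B := by
      rw [hE, measure_biUnion_finset hdis' fun i _ => hSm i]
      simp [hSmeas]
    rw [← this]; exact prob_le_one
  have hBη : m B < η := by
    refine lt_of_le_of_lt ?_ hN₀
    rw [← one_div, ENNReal.le_div_iff_mul_le (by simp) (by simp), mul_comm]
    exact le_trans (by gcongr) hNB
  have hgT : Integrable (fun x => g (T x)) m := hTm.integrable_comp_of_integrable hg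
  have hgg : Integrable (fun x => g x - g (T x)) m := hg.sub hgT
  have htel : ∀ M : ℕ, ∑ i ∈ Finset.Icc 1 M, (∫ x in S i, g x ∂m - ∫ x in S (i+1), g x ∂m)
      = ∫ x in S 1, g x ∂m - ∫ x in S (M+1), g x ∂m := by
    intro M
    induction M with
    | zero => simp
    | succ M ih => rw [Finset.sum_Icc_succ_top (by omega), ih]; ring
  have hEg : ∫ x in E, (g x - g (T x)) ∂m
      = ∫ x in S 1, g x ∂m - ∫ x in S (N+1), g x ∂m := by
    rw [hE, integral_biUnion_finset _ (fun i _ => hSm i) hdis'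
      (fun i _ => hgg.integrableOn), ← htel]
    refine Finset.sum_congr rfl fun i _ => ?_
    rw [integral_sub hg.integrableOn hgT.integrableOn, hSint]
  have b1 := hsm (S 1) (by rwa [hSmeas])
  have b2 := hsm (S (N+1)) (by rwa [hSmeas])
  set c := ∫ x, f₀ x ∂m with hc
  have hfc : Integrable (fun x => f₀ x - c) m := hf₀int.sub (integrable_const _)
  have hr : Integrable (fun x => f₀ x - c - (g x - g (T x))) m := hfc.sub (hg.sub hgT)
  have k1 : |∫ x in E, (f₀ x - c - (g x - g (T x))) ∂m| < δ₁/3 := by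
    refine lt_of_le_of_lt (abs_integral_le_integral_abs.trans ?_) hgd
    exact setIntegral_le_integral hr.abs (ae_of_all _ fun x => abs_nonneg _)
  rw [integral_sub hfc.integrableOn hgg.integrableOn, hEg] at k1
  have k2 : ∫ x in Eᶜ, (f₀ x - c) ∂m = - ∫ x in E, (f₀ x - c) ∂m := by
    have := integral_add_compl hEm hfc
    have h0 : ∫ x, (f₀ x - c) ∂m = 0 := by
      rw [integral_sub hf₀int (integrable_const _)]; simp [hc]
    linarith
  rw [integral_indicator hEm.compl]
  have k3 : ∫ x in Eᶜ, (f₀ x - c) ∂m = ∫ x in Eᶜ, f₀ x ∂m - (m Eᶜ).toReal * c := by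
    rw [integral_sub hf₀int.integrableOn (integrable_const _)]
    simp [Measure.real]
  rw [← k3, k2, abs_neg]
  rw [abs_lt] at *
  constructor <;> linarith
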